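/- Let s₁,…,sₙ ∈ Gₙ be pairwise commuting stabilizer generators with Tr(∏_{i∈A} sᵢ) = 0 for every nonempty A ⊆ {1,…,n}, and let ψ ∈ ℂ^{2ⁿ} be a unit vector with sᵢψ = ψ for all i. Suppose d₁,…,dₙ ∈ Gₙ and d′₁,…,d′ₙ ∈ Gₙ are two sets of destabilizers for (s₁,…,sₙ): each set consists of pairwise commuting elements of Gₙ with dᵢsᵢ = −sᵢdᵢ, dᵢsⱼ = sⱼdᵢ for j ≠ i (and similarly for d′ᵢ). Then for every b ∈ {0,1}ⁿ there exists a phase α ∈ {1, i, −1, −i} such that (∏ᵢ d′ᵢ^{bᵢ}) ψ = α (∏ᵢ dᵢ^{bᵢ}) ψ (products in order of increasing i); that is, the stabilizer bases B(S,D) and B(S,D′) coincide up to phases. -/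

import Mathlib

/-!
The generators satisfy `s i * s i = 1`, because every Pauli element squares to `±1` and `s i` fixes
the nonzero vector `ψ`. Hence `2⁻ⁿ ∏ i, (1 + s i)` is a projection onto the joint `+1` eigenspace
of the `s i`. Expanding the product over subsets, the trace hypothesis leaves only the empty subset,
so the projection has trace `1` and the eigenspace is the line spanned by `ψ`.

Write `D = ∏ i, d i ^ b i` and `D' = ∏ i, d' i ^ b i`. Both pick up the same sign when moved past
a given `s j`, so `W = D * D'` commutes with every `s j` and preserves that line: `W ψ = c ψ`.
Since `W` and `D` are Pauli elements, `W * W = ±1` gives `c ^ 2 = ±1`, that is `c ∈ {±1, ±i}`, and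
`D * D = ±1` turns `D (D' ψ) = c ψ` into `D' ψ = ± c D ψ`.
-/

open Matrix

/-- The single-qubit Pauli matrices `I, X, Y, Z`. -/
def pauliMat : Fin 4 → Matrix (Fin 2) (Fin 2) ℂ
  | 0 => !![1, 0; 0, 1]
  | 1 => !![0, 1; 1, 0]
  | 2 => !![0, -Complex.I; Complex.I, 0]
  | 3 => !![1, 0; 0, -1]

/-- The unphased `n`-qubit Pauli string `σ_{a 1} ⊗ ⋯ ⊗ σ_{a n}`, realized as a matrix
acting on `ℂ^{2^n}` with index set `Fin n → Fin 2` (the `n`-fold Kronecker product,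
written entrywise). -/
def pauliString {n : ℕ} (a : Fin n → Fin 4) :
    Matrix (Fin n → Fin 2) (Fin n → Fin 2) ℂ :=
  fun x y => ∏ i, pauliMat (a i) (x i) (y i)

/-- The `n`-qubit Pauli group `G_n`: all matrices `i^k P` with `k ∈ {0,1,2,3}` and `P`
an unphased Pauli string. -/
def PauliGroup (n : ℕ) : Set (Matrix (Fin n → Fin 2) (Fin n → Fin 2) ℂ) :=
  {Q | ∃ (k : Fin 4) (a : Fin n → Fin 4), Q = Complex.I ^ (k : ℕ) • pauliString a}

lemma pauliMat_mul (a b : Fin 4) : ∃ (k : ℕ) (c : Fin 4),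
    pauliMat a * pauliMat b = Complex.I ^ k • pauliMat c := by
  -- The index of the product is the bitwise `xor` of the two indices.
  fin_cases a <;> fin_cases b
  · exact ⟨0, 0, by ext i j; fin_cases i <;> fin_cases j <;> simp [pauliMat]⟩
  · exact ⟨0, 1, by ext i j; fin_cases i <;> fin_cases j <;> simp [pauliMat]⟩
  · exact ⟨0, 2, by ext i j; fin_cases i <;> fin_cases j <;> simp [pauliMat]⟩
  · exact ⟨0, 3, by ext i j; fin_cases i <;> fin_cases j <;> simp [pauliMat]⟩
  · exact ⟨0, 1, by ext i j; fin_cases i <;> fin_cases j <;> simp [pauliMat]⟩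
  · exact ⟨0, 0, by ext i j; fin_cases i <;> fin_cases j <;> simp [pauliMat]⟩
  · exact ⟨1, 3, by ext i j; fin_cases i <;> fin_cases j <;> simp [pauliMat]⟩
  · exact ⟨3, 2, by ext i j; fin_cases i <;> fin_cases j <;> simp [pauliMat, pow_succ]⟩
  · exact ⟨0, 2, by ext i j; fin_cases i <;> fin_cases j <;> simp [pauliMat]⟩
  · exact ⟨3, 3, by ext i j; fin_cases i <;> fin_cases j <;> simp [pauliMat, pow_succ]⟩
  · exact ⟨0, 0, by ext i j; fin_cases i <;> fin_cases j <;> simp [pauliMat]⟩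
  · exact ⟨1, 1, by ext i j; fin_cases i <;> fin_cases j <;> simp [pauliMat]⟩
  · exact ⟨0, 3, by ext i j; fin_cases i <;> fin_cases j <;> simp [pauliMat]⟩
  · exact ⟨1, 2, by ext i j; fin_cases i <;> fin_cases j <;> simp [pauliMat]⟩
  · exact ⟨3, 1, by ext i j; fin_cases i <;> fin_cases j <;> simp [pauliMat, pow_succ]⟩
  · exact ⟨0, 0, by ext i j; fin_cases i <;> fin_cases j <;> simp [pauliMat]⟩

lemma pauliMat_zero : pauliMat 0 = 1 := by
  ext i j; fin_cases i <;> fin_cases j <;> simp [pauliMat]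

lemma pauliMat_mul_self (a : Fin 4) : pauliMat a * pauliMat a = 1 := by
  fin_cases a <;> ext i j <;> fin_cases i <;> fin_cases j <;> simp [pauliMat]

/-- Products of Pauli strings are computed qubit by qubit. -/
lemma pauliString_mul_apply {n : ℕ} (a b : Fin n → Fin 4) (x z : Fin n → Fin 2) :
    (pauliString a * pauliString b) x z =
      ∏ i, (pauliMat (a i) * pauliMat (b i)) (x i) (z i) := by
  simp only [Matrix.mul_apply, pauliString, ← Finset.prod_mul_distrib]
  rw [Finset.prod_univ_sum, Fintype.piFinset_univ]

lemma prod_one_apply {n : ℕ} (x z : Fin n → Fin 2) :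
    ∏ i, (1 : Matrix (Fin 2) (Fin 2) ℂ) (x i) (z i) =
      (1 : Matrix (Fin n → Fin 2) (Fin n → Fin 2) ℂ) x z := by
  simp only [Matrix.one_apply, Finset.prod_ite_zero, Finset.prod_const_one, funext_iff,
    Finset.mem_univ, true_imp_iff]

lemma pauliString_mul_self {n : ℕ} (a : Fin n → Fin 4) : pauliString a * pauliString a = 1 := by
  ext x z
  rw [pauliString_mul_apply]
  simp only [pauliMat_mul_self, prod_one_apply]

lemma smul_pauliString_mem {n : ℕ} (k : ℕ) (a : Fin n → Fin 4) :
    Complex.I ^ k • pauliString a ∈ PauliGroup n :=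
  ⟨⟨k % 4, Nat.mod_lt _ (by norm_num)⟩, a, by rw [Complex.I_pow_eq_pow_mod k]⟩

lemma one_mem_pauliGroup {n : ℕ} : 1 ∈ PauliGroup n := by
  have h := smul_pauliString_mem (n := n) 0 (fun _ => 0)
  have h1 : pauliString (n := n) (fun _ => 0) = 1 := by
    ext x z
    simp only [pauliString, pauliMat_zero, prod_one_apply]
  simpa [h1] using h

lemma mul_mem_pauliGroup {n : ℕ} {P Q : Matrix (Fin n → Fin 2) (Fin n → Fin 2) ℂ}
    (hP : P ∈ PauliGroup n) (hQ : Q ∈ PauliGroup n) : P * Q ∈ PauliGroup n := by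
  obtain ⟨k, a, rfl⟩ := hP
  obtain ⟨l, b, rfl⟩ := hQ
  choose m c hmc using fun i => pauliMat_mul (a i) (b i)
  have h : pauliString a * pauliString b = Complex.I ^ (∑ i, m i) • pauliString c := by
    ext x z
    rw [pauliString_mul_apply]
    simp [hmc, Finset.prod_mul_distrib, Finset.prod_pow_eq_pow_sum, pauliString]
  rw [smul_mul_smul_comm, h, smul_smul, ← pow_add, ← pow_add]
  exact smul_pauliString_mem _ _

lemma list_prod_mem_pauliGroup {n : ℕ} (l : List (Matrix (Fin n → Fin 2) (Fin n → Fin 2) ℂ))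
    (h : ∀ P ∈ l, P ∈ PauliGroup n) : l.prod ∈ PauliGroup n := by
  induction l with
  | nil => exact one_mem_pauliGroup
  | cons P l ih =>
    rw [List.prod_cons]
    exact mul_mem_pauliGroup (h P (by simp)) (ih fun Q hQ => h Q (by simp [hQ]))

lemma pauliGroup_mul_self {n : ℕ} {P : Matrix (Fin n → Fin 2) (Fin n → Fin 2) ℂ}
    (hP : P ∈ PauliGroup n) : ∃ e : ℂ, (e = 1 ∨ e = -1) ∧ P * P = e • 1 := by
  obtain ⟨k, a, rfl⟩ := hP
  refine ⟨Complex.I ^ (k : ℕ) * Complex.I ^ (k : ℕ), ?_, ?_⟩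
  · rw [← mul_pow, Complex.I_mul_I]
    exact neg_one_pow_eq_or ℂ _
  · rw [smul_mul_smul_comm, pauliString_mul_self]

/-- If each factor `f i` moves past `t` at the cost of a scalar `e i`, then the ordered product
moves past `t` at the cost of `∏ i, e i`. -/
lemma ofFn_prod_mul {R : Type*} [Ring R] [Algebra ℂ R] (t : R) {m : ℕ} (f : Fin m → R)
    (e : Fin m → ℂ) (h : ∀ i, f i * t = e i • (t * f i)) :
    (List.ofFn f).prod * t = (∏ i, e i) • (t * (List.ofFn f).prod) := by
  induction m with
  | zero => simp
  | succ m ih =>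
    rw [List.ofFn_succ, List.prod_cons, Fin.prod_univ_succ, mul_assoc,
      ih (fun i => f i.succ) (fun i => e i.succ) (fun i => h i.succ), mul_smul_comm,
      ← mul_assoc, h 0, smul_mul_assoc, smul_smul, mul_assoc, mul_comm (e 0)]

lemma mul_list_prod_eq_self {R : Type*} [Monoid R] (a : R) (l : List R)
    (hc : ∀ x ∈ l, a * x = x * a) (h : ∃ x ∈ l, a * x = x) : a * l.prod = l.prod := by
  induction l with
  | nil => simp at h
  | cons y l ih =>
    obtain ⟨x, hx, hax⟩ := h
    rw [List.prod_cons]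
    rcases List.mem_cons.1 hx with rfl | hx
    · rw [← mul_assoc, hax]
    · rw [← mul_assoc, hc y (by simp), mul_assoc,
        ih (fun z hz => hc z (by simp [hz])) ⟨x, hx, hax⟩]

lemma list_prod_mulVec {ι : Type*} [Fintype ι] [DecidableEq ι] (l : List (Matrix ι ι ℂ))
    (v : ι → ℂ) (h : ∀ x ∈ l, x *ᵥ v = (2 : ℂ) • v) :
    l.prod *ᵥ v = (2 : ℂ) ^ l.length • v := by
  induction l with
  | nil => simp
  | cons x l ih =>
    rw [List.prod_cons, ← Matrix.mulVec_mulVec, ih fun y hy => h y (by simp [hy]),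
      Matrix.mulVec_smul, h x (by simp), smul_smul, List.length_cons, pow_succ]

/-- Only the empty subset contributes to the trace of `∏ i, (1 + s i)`. -/
lemma trace_prod_one_add {n : ℕ} (s : Fin n → Matrix (Fin n → Fin 2) (Fin n → Fin 2) ℂ)
    (htr : ∀ A : Finset (Fin n), A.Nonempty →
      (List.ofFn (fun i => if i ∈ A then s i else 1)).prod.trace = 0) :
    (List.ofFn (fun i => s i + 1)).prod.trace = 2 ^ n := by
  have h := (MultilinearMap.mkPiAlgebraFin ℂ n
    (Matrix (Fin n → Fin 2) (Fin n → Fin 2) ℂ)).map_add_univ s (fun _ => 1)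
  simp only [MultilinearMap.mkPiAlgebraFin_apply] at h
  have h' : (List.ofFn (fun i => s i + 1)).prod =
      ∑ A : Finset (Fin n), (List.ofFn (fun i => if i ∈ A then s i else 1)).prod := h
  rw [h', Matrix.trace_sum, Finset.sum_eq_single ∅]
  · simp [List.ofFn_const]
  · intro A _ hA
    exact htr A (Finset.nonempty_iff_ne_empty.2 hA)
  · simp

/-- The joint `+1` eigenspace of independent commuting involutions is one-dimensional. -/
lemma eq_smul_of_stab {n : ℕ} (s : Fin n → Matrix (Fin n → Fin 2) (Fin n → Fin 2) ℂ)
    (hscomm : ∀ i j, s i * s j = s j * s i) (hsq : ∀ i, s i * s i = 1)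
    (htr : ∀ A : Finset (Fin n), A.Nonempty →
      (List.ofFn (fun i => if i ∈ A then s i else 1)).prod.trace = 0)
    (ψ : (Fin n → Fin 2) → ℂ) (hψ : ψ ≠ 0) (hstab : ∀ i, s i *ᵥ ψ = ψ)
    (v : (Fin n → Fin 2) → ℂ) (hv : ∀ i, s i *ᵥ v = v) : ∃ c : ℂ, v = c • ψ := by
  let V : Submodule ℂ ((Fin n → Fin 2) → ℂ) :=
    { carrier := {w | ∀ i, s i *ᵥ w = w}
      add_mem' := fun {x y} hx hy i => by rw [Matrix.mulVec_add, hx i, hy i]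
      zero_mem' := fun i => Matrix.mulVec_zero _
      smul_mem' := fun c x hx i => by rw [Matrix.mulVec_smul, hx i] }
  set M := (List.ofFn (fun i => s i + 1)).prod with hM
  have hsM : ∀ i, s i * M = M := fun i => by
    refine mul_list_prod_eq_self _ _ ?_ ⟨s i + 1, by simp [List.mem_ofFn], ?_⟩
    · intro x hx
      obtain ⟨j, rfl⟩ := List.mem_ofFn.1 hx
      rw [mul_add, add_mul, hscomm i j, mul_one, one_mul]
    · rw [mul_add, hsq, mul_one, add_comm]
  have hproj : LinearMap.IsProj V (Matrix.toLin' (((2 : ℂ) ^ n)⁻¹ • M)) := by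
    constructor
    · intro x i
      rw [Matrix.toLin'_apply, Matrix.mulVec_mulVec, mul_smul_comm, hsM]
    · intro x hx
      have := list_prod_mulVec (List.ofFn (fun i => s i + 1)) x (by
        intro y hy
        obtain ⟨j, rfl⟩ := List.mem_ofFn.1 hy
        rw [Matrix.add_mulVec, hx j, Matrix.one_mulVec, two_smul])
      rw [← hM, List.length_ofFn] at this
      rw [Matrix.toLin'_apply, Matrix.smul_mulVec, this, smul_smul,
        inv_mul_cancel₀ (pow_ne_zero n two_ne_zero), one_smul]
  have hrank : Module.finrank ℂ V = 1 := by
    have h := hproj.trace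
    rw [Matrix.trace_toLin'_eq, Matrix.trace_smul, trace_prod_one_add s htr, smul_eq_mul,
      inv_mul_cancel₀ (pow_ne_zero n two_ne_zero)] at h
    exact_mod_cast h.symm
  obtain ⟨c, hc⟩ := (finrank_eq_one_iff_of_nonzero' (⟨ψ, hstab⟩ : V)
    (fun h => hψ (congrArg Subtype.val h))).1 hrank ⟨v, hv⟩
  exact ⟨c, (congrArg Subtype.val hc).symm⟩

/-- Let `s 1, …, s n ∈ G_n` be pairwise commuting stabilizer generators with
`Tr (∏ i in A, s i) = 0` for every nonempty `A`, and let `ψ` be a unit vector with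
`s i ψ = ψ` for all `i`.  If `d` and `d'` are two sets of destabilizers for `s`
(pairwise commuting elements of `G_n`, with `d i` anticommuting with `s i` and commuting
with `s j` for `j ≠ i`), then for every `b ∈ {0,1}^n` there is a phase
`α ∈ {1, i, −1, −i}` with `(∏ i, d' i ^ (b i)) ψ = α (∏ i, d i ^ (b i)) ψ`
(products in order of increasing `i`): the stabilizer bases `B(S,D)` and `B(S,D')`
coincide up to phases. -/
theorem stmt13 {n : ℕ} (s d d' : Fin n → Matrix (Fin n → Fin 2) (Fin n → Fin 2) ℂ)
    (hsG : ∀ i, s i ∈ PauliGroup n)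
    (hscomm : ∀ i j, s i * s j = s j * s i)
    (htr : ∀ A : Finset (Fin n), A.Nonempty →
      (List.ofFn (fun i => if i ∈ A then s i else 1)).prod.trace = 0)
    (ψ : (Fin n → Fin 2) → ℂ) (hψ : star ψ ⬝ᵥ ψ = 1)
    (hstab : ∀ i, (s i).mulVec ψ = ψ)
    (hdG : ∀ i, d i ∈ PauliGroup n) (hd'G : ∀ i, d' i ∈ PauliGroup n)
    (hdcomm : ∀ i j, d i * d j = d j * d i)
    (hd'comm : ∀ i j, d' i * d' j = d' j * d' i)
    (hanti : ∀ i, d i * s i = -(s i * d i))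
    (hcomm : ∀ i j, i ≠ j → d i * s j = s j * d i)
    (hanti' : ∀ i, d' i * s i = -(s i * d' i))
    (hcomm' : ∀ i j, i ≠ j → d' i * s j = s j * d' i) :
    ∀ b : Fin n → Bool, ∃ α ∈ ({1, Complex.I, -1, -Complex.I} : Set ℂ),
      (List.ofFn (fun i => if b i then d' i else 1)).prod.mulVec ψ =
        α • (List.ofFn (fun i => if b i then d i else 1)).prod.mulVec ψ := by
  intro b
  have hψ0 : ψ ≠ 0 := by
    rintro rfl
    simp at hψ
  have cancel : ∀ x y : ℂ, x • ψ = y • ψ → x = y := fun x y h => smul_left_injective ℂ hψ0 h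
  have hsq : ∀ i, s i * s i = 1 := fun i => by
    obtain ⟨e, -, he⟩ := pauliGroup_mul_self (hsG i)
    have h : e • ψ = (1 : ℂ) • ψ := by
      rw [one_smul, ← Matrix.one_mulVec (e • ψ), Matrix.mulVec_smul, ← Matrix.smul_mulVec, ← he,
        ← Matrix.mulVec_mulVec, hstab, hstab]
    rw [he, cancel _ _ h, one_smul]
  have hmem : ∀ f : Fin n → Matrix (Fin n → Fin 2) (Fin n → Fin 2) ℂ,
      (∀ i, f i ∈ PauliGroup n) →
      (List.ofFn (fun i => if b i then f i else 1)).prod ∈ PauliGroup n := fun f hf => by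
    refine list_prod_mem_pauliGroup _ fun P hP => ?_
    obtain ⟨i, rfl⟩ := List.mem_ofFn.1 hP
    split_ifs
    exacts [hf i, one_mem_pauliGroup]
  -- The sign from moving past `s j` depends only on `b`, so it agrees for `d` and `d'`.
  let e : Fin n → ℂ := fun j => ∏ i, if b i ∧ i = j then -1 else 1
  have hee : ∀ j, e j * e j = 1 := fun j => by
    rw [← Finset.prod_mul_distrib]
    exact Finset.prod_eq_one fun i _ => by split_ifs <;> norm_num
  have hmove : ∀ f : Fin n → Matrix (Fin n → Fin 2) (Fin n → Fin 2) ℂ,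
      (∀ i, f i * s i = -(s i * f i)) → (∀ i j, i ≠ j → f i * s j = s j * f i) →
      ∀ j, (List.ofFn (fun i => if b i then f i else 1)).prod * s j =
        e j • (s j * (List.ofFn (fun i => if b i then f i else 1)).prod) := fun f h1 h2 j => by
    refine ofFn_prod_mul _ _ _ fun i => ?_
    by_cases hb : b i = true
    · by_cases hij : i = j
      · subst hij
        simp [hb, h1]
      · simp [hb, hij, h2 i j hij]
    · simp [hb]
  have hD := hmem d hdG
  have hD' := hmem d' hd'G
  have hm := hmove d hanti hcomm
  have hm' := hmove d' hanti' hcomm'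
  generalize (List.ofFn (fun i => if b i then d i else 1)).prod = D at *
  generalize (List.ofFn (fun i => if b i then d' i else 1)).prod = D' at *
  have hW : ∀ j, s j * (D * D') = D * D' * s j := fun j => by
    rw [mul_assoc D, hm', mul_smul_comm, ← mul_assoc D, hm, smul_mul_assoc, smul_smul, hee,
      one_smul, mul_assoc]
  obtain ⟨c, hc⟩ := eq_smul_of_stab s hscomm hsq htr ψ hψ0 hstab ((D * D') *ᵥ ψ) fun j => by
    rw [Matrix.mulVec_mulVec, hW, ← Matrix.mulVec_mulVec, hstab]
  obtain ⟨w, hw, hWW⟩ := pauliGroup_mul_self (mul_mem_pauliGroup hD hD')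
  obtain ⟨u, hu, hDD⟩ := pauliGroup_mul_self hD
  have hcw : c * c = w := by
    apply cancel
    rw [mul_smul, ← hc, ← Matrix.mulVec_smul, ← hc, Matrix.mulVec_mulVec, hWW,
      Matrix.smul_mulVec, Matrix.one_mulVec]
  have huc : u • D' *ᵥ ψ = c • D *ᵥ ψ := by
    rw [← Matrix.mulVec_smul D, ← hc, Matrix.mulVec_mulVec, ← mul_assoc, hDD, smul_mul_assoc,
      one_mul, Matrix.smul_mulVec]
  have huu : u * u = 1 := by rcases hu with rfl | rfl <;> norm_num
  refine ⟨u * c, ?_, ?_⟩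
  · have h2 : (u * c) * (u * c) = w := by
      linear_combination (c * c) * huu + hcw
    rcases hw with rfl | rfl
    · rcases mul_self_eq_one_iff.1 h2 with h | h <;> simp [h]
    · rw [← Complex.I_mul_I] at h2
      rcases mul_self_eq_mul_self_iff.1 h2 with h | h <;> simp [h]
  · rw [mul_smul, ← huc, smul_smul, huu, one_smul]
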